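/- arXiv:2409.13161 — 3 statements merged into one kernel-verified Lean document; each statement's English description precedes it below -/
import Mathlib

section
/- For every integer q ≥ 2, the graph ME_q (the complement of MEbar_q) is 2K2-free. -/
/-- A graph is `2K₂`-free if it has no induced subgraph isomorphic to `2K₂`
(two vertex-disjoint edges with no edges between them). -/
def TwoK2Free {V : Type*} (G : SimpleGraph V) : Prop :=
  ¬ ∃ a b c d : V, G.Adj a b ∧ G.Adj c d ∧
      ¬ G.Adj a c ∧ ¬ G.Adj a d ∧ ¬ G.Adj b c ∧ ¬ G.Adj b d

/-- The graph `MEbar_q`.  The vertices `0, 1, …, q+1` of `Fin (4q+2)` are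
`u_0, …, u_{q+1}` and, for `1 ≤ i ≤ q`, the vertices `q+3i-1, q+3i, q+3i+1` are
`v_{i1}, v_{i2}, v_{i3}`; listed in this order the vertices form a Hamiltonian cycle,
and the extra edges are `u_i v_{i2}` and `v_{i1} v_{i3}` for `1 ≤ i ≤ q`. -/
def MEbar (q : ℕ) : SimpleGraph (Fin (4*q+2)) :=
  SimpleGraph.fromRel (fun a b =>
    b.val = a.val + 1 ∨ (a.val = 0 ∧ b.val = 4*q+1) ∨
    (∃ i, 1 ≤ i ∧ i ≤ q ∧ a.val = i ∧ b.val = q + 3*i) ∨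
    (∃ i, 1 ≤ i ∧ i ≤ q ∧ a.val = q + 3*i - 1 ∧ b.val = q + 3*i + 1))

/-!
In complementary terms `MEbar q` must contain no induced four-cycle. In the order of the
Hamiltonian cycle, the largest vertex `a` of such a four-cycle would have two non-adjacent smaller
neighbours. This happens only for `a = v_{i2}`, with the pair `u_i, v_{i1}`, and for `a = v_{q3}`,
with `u_0` and one of `v_{q1}, v_{q2}`. For `q ≥ 2` each of these pairs has `a` as its only common
neighbour, so the four-cycle cannot be closed.
-/

section Complement

variable {V : Type*} {G : SimpleGraph V}

theorem twoK2Free_compl_iff_isClique_commonNeighbors :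
    TwoK2Free Gᶜ ↔ ∀ ⦃a b : V⦄, Gᶜ.Adj a b → G.IsClique (G.commonNeighbors a b) := by
  constructor
  · intro h a b hab c hc d hd hcd
    rw [SimpleGraph.mem_commonNeighbors] at hc hd
    by_contra hncd
    exact h ⟨a, b, c, d, hab, ⟨hcd, hncd⟩, fun h => h.2 hc.1, fun h => h.2 hd.1,
      fun h => h.2 hc.2, fun h => h.2 hd.2⟩
  · rintro h ⟨a, b, c, d, hab, hcd, hac, had, hbc, hbd⟩
    have adj_of_ne {x y : V} (hne : x ≠ y) (hxy : ¬Gᶜ.Adj x y) : G.Adj x y := by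
      simpa [hne] using hxy
    have hac' : G.Adj a c := adj_of_ne (fun e => had (e ▸ hcd)) hac
    have had' : G.Adj a d := adj_of_ne (fun e => hac (e ▸ hcd.symm)) had
    have hbc' : G.Adj b c := adj_of_ne (fun e => hbd (e ▸ hcd)) hbc
    have hbd' : G.Adj b d := adj_of_ne (fun e => hbc (e ▸ hcd.symm)) hbd
    exact hcd.2 (h hab ⟨hac', hbc'⟩ ⟨had', hbd'⟩ hcd.1)

theorem max_lt_max_of_mem_commonNeighbors [LinearOrder V] {a b c d : V}
    (h : ∀ ⦃c d a b : V⦄, c < d → d < a → ¬G.Adj c d →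
      a ∈ G.commonNeighbors c d → b ∈ G.commonNeighbors c d → a ≤ b)
    (hab : a ≠ b) (hcd : Gᶜ.Adj c d)
    (ha : a ∈ G.commonNeighbors c d) (hb : b ∈ G.commonNeighbors c d) :
    max a b < max c d := by
  wlog hba : b < a generalizing a b
  · rw [max_comm]
    exact this hab.symm hb ha (hab.lt_of_le (not_lt.1 hba))
  wlog hlt : c < d generalizing c d
  · rw [max_comm c d]
    exact this hcd.symm ha.symm hb.symm (hcd.ne.symm.lt_of_le (not_lt.1 hlt))
  rw [max_eq_left hba.le, max_eq_right hlt.le]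
  by_contra! hda
  exact (h hlt (hda.lt_of_ne ha.2.ne) hcd.2 ha hb).not_gt hba

theorem twoK2Free_compl_of_le_commonNeighbors [LinearOrder V]
    (h : ∀ ⦃c d a b : V⦄, c < d → d < a → ¬G.Adj c d →
      a ∈ G.commonNeighbors c d → b ∈ G.commonNeighbors c d → a ≤ b) :
    TwoK2Free Gᶜ := by
  rw [twoK2Free_compl_iff_isClique_commonNeighbors]
  intro a b hab c hc d hd hne
  by_contra hncd
  have hcd : Gᶜ.Adj c d := ⟨hne, hncd⟩
  have ha : a ∈ G.commonNeighbors c d := ⟨hc.1.symm, hd.1.symm⟩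
  have hb : b ∈ G.commonNeighbors c d := ⟨hc.2.symm, hd.2.symm⟩
  exact (max_lt_max_of_mem_commonNeighbors h hab.ne hcd ha hb).asymm
    (max_lt_max_of_mem_commonNeighbors h hne hab hc hd)

end Complement

namespace MEbar

variable {q : ℕ} {a b c d : Fin (4 * q + 2)}

theorem adj_iff_of_lt (hab : a < b) :
    (MEbar q).Adj a b ↔ b.val = a.val + 1 ∨ (a.val = 0 ∧ b.val = 4 * q + 1) ∨
      (1 ≤ a.val ∧ a.val ≤ q ∧ b.val = q + 3 * a.val) ∨
      ∃ i, 1 ≤ i ∧ i ≤ q ∧ a.val + 1 = q + 3 * i ∧ b.val = q + 3 * i + 1 := by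
  rw [MEbar, SimpleGraph.fromRel_adj]
  constructor
  · rintro ⟨-, (h | h | ⟨i, h⟩ | ⟨i, h⟩) | hba⟩
    · exact .inl h
    · exact .inr (.inl h)
    · exact .inr (.inr (.inl (by omega)))
    · exact .inr (.inr (.inr ⟨i, by omega⟩))
    · rcases hba with h | h | ⟨i, h⟩ | ⟨i, h⟩ <;> omega
  · rintro (h | h | h | ⟨i, h⟩)
    · exact ⟨hab.ne, .inl (.inl h)⟩
    · exact ⟨hab.ne, .inl (.inr (.inl h))⟩
    · exact ⟨hab.ne, .inl (.inr (.inr (.inl ⟨a, by omega⟩)))⟩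
    · exact ⟨hab.ne, .inl (.inr (.inr (.inr ⟨i, by omega⟩)))⟩

theorem val_eq_of_adj_u_zero (ha : a.val = 0) (hab : (MEbar q).Adj a b) :
    b.val = 1 ∨ b.val = 4 * q + 1 := by
  have hlt : a < b := by have := hab.ne; omega
  rcases (adj_iff_of_lt hlt).1 hab with h | h | h | ⟨i, h⟩ <;> omega

theorem val_eq_of_adj_u (ha : 1 ≤ a.val) (haq : a.val ≤ q) (hab : (MEbar q).Adj a b) :
    b.val + 1 = a.val ∨ b.val = a.val + 1 ∨ b.val = q + 3 * a.val := by
  rcases hab.ne.lt_or_gt with hlt | hgt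
  · rcases (adj_iff_of_lt hlt).1 hab with h | h | h | ⟨i, h⟩ <;> omega
  · rcases (adj_iff_of_lt hgt).1 hab.symm with h | h | h | ⟨i, h⟩ <;> omega

theorem val_eq_of_adj_v_one {i : ℕ} (hi : 1 ≤ i) (ha : a.val + 1 = q + 3 * i)
    (hab : (MEbar q).Adj a b) :
    b.val + 1 = a.val ∨ b.val = q + 3 * i ∨ b.val = q + 3 * i + 1 := by
  rcases hab.ne.lt_or_gt with hlt | hgt
  · rcases (adj_iff_of_lt hlt).1 hab with h | h | h | ⟨j, h⟩ <;> omega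
  · rcases (adj_iff_of_lt hgt).1 hab.symm with h | h | h | ⟨j, h⟩ <;> omega

theorem nonadj_lower_neighbors_cases (hcd : c < d) (hda : d < a) (hncd : ¬(MEbar q).Adj c d)
    (ha : a ∈ (MEbar q).commonNeighbors c d) :
    (1 ≤ c.val ∧ d.val + 1 = q + 3 * c.val ∧ a.val = q + 3 * c.val) ∨
      (c.val = 0 ∧ (d.val + 2 = a.val ∨ d.val + 1 = a.val) ∧ a.val = 4 * q + 1) := by
  have hsucc : d.val ≠ c.val + 1 := fun h => hncd ((adj_iff_of_lt hcd).2 (.inl h))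
  rcases (adj_iff_of_lt (hcd.trans hda)).1 ha.1 with hc | hc | hc | ⟨i, hc⟩ <;>
    rcases (adj_iff_of_lt hda).1 ha.2 with hd | hd | hd | ⟨j, hd⟩ <;> omega

theorem val_eq_of_mem_commonNeighbors_u_v_one (hq : 2 ≤ q) (hc : 1 ≤ c.val)
    (hd : d.val + 1 = q + 3 * c.val) (hb : b ∈ (MEbar q).commonNeighbors c d) :
    b.val = q + 3 * c.val := by
  have hbc := val_eq_of_adj_u hc (by omega) hb.1
  have hbd := val_eq_of_adj_v_one hc hd hb.2
  omega

theorem val_eq_of_mem_commonNeighbors_u_zero (hq : 2 ≤ q) (hc : c.val = 0)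
    (hd : d.val + 1 = 4 * q ∨ d.val = 4 * q) (hb : b ∈ (MEbar q).commonNeighbors c d) :
    b.val = 4 * q + 1 := by
  refine (val_eq_of_adj_u_zero hc hb.1).resolve_left fun hb_one => ?_
  have hdb := val_eq_of_adj_u (by omega) (by omega) hb.2.symm
  omega

theorem eq_of_mem_commonNeighbors_of_lt (hq : 2 ≤ q) (hcd : c < d) (hda : d < a)
    (hncd : ¬(MEbar q).Adj c d) (ha : a ∈ (MEbar q).commonNeighbors c d)
    (hb : b ∈ (MEbar q).commonNeighbors c d) : a = b := by
  rcases nonadj_lower_neighbors_cases hcd hda hncd ha with ⟨hc, hd, hav⟩ | ⟨hc, hd, hav⟩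
  · exact Fin.ext (hav.trans (val_eq_of_mem_commonNeighbors_u_v_one hq hc hd hb).symm)
  · exact Fin.ext (hav.trans (val_eq_of_mem_commonNeighbors_u_zero hq hc (by omega) hb).symm)

end MEbar

/-- for every `q ≥ 2`, the graph `ME_q` (the complement of `MEbar_q`)
is `2K₂`-free. -/
theorem stmt6 : ∀ q : ℕ, 2 ≤ q → TwoK2Free (MEbar q)ᶜ := by
  intro q hq
  apply twoK2Free_compl_of_le_commonNeighbors
  intro c d a b hcd hda hncd ha hb
  exact (MEbar.eq_of_mem_commonNeighbors_of_lt hq hcd hda hncd ha hb).le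
end

section
/- For every integer q ≥ 2, the graph KMbar_q is C4-free. -/
/-- A graph is `C₄`-free if it has no induced subgraph isomorphic to the 4-cycle. -/
def C4Free {V : Type*} (G : SimpleGraph V) : Prop :=
  ¬ ∃ a b c d : V, a ≠ c ∧ b ≠ d ∧ G.Adj a b ∧ G.Adj b c ∧ G.Adj c d ∧ G.Adj d a ∧
      ¬ G.Adj a c ∧ ¬ G.Adj b d

/-- `KMbar_q` is `MEbar_q` with the edges `u_1u_2, u_2u_3, …, u_{q-1}u_q` deleted. -/
def KMbar (q : ℕ) : SimpleGraph (Fin (4*q+2)) :=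
  MEbar q \ SimpleGraph.fromRel (fun a b => ∃ i, 1 ≤ i ∧ i ≤ q - 1 ∧ a.val = i ∧ b.val = i+1)

/-!
`KMbar q` with `q ≥ 2` contains no 4-cycle at all, induced or not. Number the vertices as in
`MEbar`. The largest vertex of a 4-cycle has two smaller neighbours in it, and the only vertices
with two smaller neighbours are `v_{i2}`, above `u_i` and `v_{i1}`, and `v_{i3}`, above `v_{i1}` and
`v_{i2}` and, when `i = q`, also above `u_0`. In each case the two smaller neighbours have no
further common neighbour, so the cycle cannot close up.
-/

theorem c4Free_of_commonNeighbors_subsingleton {V : Type*} {G : SimpleGraph V}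
    (h : ∀ ⦃a c⦄, a ≠ c → (G.commonNeighbors a c).Subsingleton) : C4Free G := by
  rintro ⟨a, b, c, d, hac, hbd, hab, hbc, hcd, hda, -, -⟩
  exact hbd (h hac ⟨hab, hbc.symm⟩ ⟨hda.symm, hcd⟩)

theorem commonNeighbors_subsingleton_of_forall_le {V : Type*} [LinearOrder V] {G : SimpleGraph V}
    (h : ∀ ⦃m b d⦄, b < d → d < m → G.Adj b m → G.Adj d m → ∀ c ∈ G.commonNeighbors b d, m ≤ c)
    ⦃a c : V⦄ (hac : a ≠ c) : (G.commonNeighbors a c).Subsingleton := by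
  have no_cycle_below : ∀ ⦃m b c d⦄, b ≠ d → b < m → d < m → c < m →
      G.Adj b m → G.Adj d m → G.Adj b c → G.Adj d c → False := by
    intro m b c d hbd hbm hdm hcm bm dm bc dc
    rcases hbd.lt_or_gt with hlt | hlt
    · exact (h hlt hdm bm dm c ⟨bc, dc⟩).not_gt hcm
    · exact (h hlt hbm dm bm c ⟨dc, bc⟩).not_gt hcm
  rintro b ⟨ab, cb⟩ d ⟨ad, cd⟩
  by_contra hbd
  wlog hca : c < a generalizing a c
  · exact this hac.symm cb ab cd ad (hac.lt_or_gt.resolve_right hca)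
  wlog hdb : d < b generalizing b d
  · exact this (Ne.symm hbd) ad cd ab cb ((Ne.lt_or_gt hbd).resolve_right hdb)
  rcases ab.ne.lt_or_gt with hlt | hlt
  · exact no_cycle_below hac hlt (hca.trans hlt) hdb ab cb ad cd
  · exact no_cycle_below hbd hlt (hdb.trans hlt) hca ab.symm ad.symm cb.symm cd.symm

/-- The edges of `KMbar q`, directed from the smaller to the larger vertex number. The last
disjunct is `v_{i1} v_{i3}`, where `v_{i1}` has number `a = q + 3 * i - 1`, written without
truncated subtraction. -/
def KMArc (q a b : ℕ) : Prop :=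
  (b = a + 1 ∧ (a = 0 ∨ q ≤ a)) ∨ (a = 0 ∧ b = 4 * q + 1) ∨
    (1 ≤ a ∧ a ≤ q ∧ b = q + 3 * a) ∨
    ∃ i, 1 ≤ i ∧ i ≤ q ∧ a + 1 = q + 3 * i ∧ b = q + 3 * i + 1

theorem KMArc.lt {q a b : ℕ} (h : KMArc q a b) : a < b := by
  rcases h with h | h | h | ⟨i, h⟩ <;> omega

theorem kmArc_or_kmArc_of_adj {q : ℕ} {a b : Fin (4 * q + 2)} (h : (KMbar q).Adj a b) :
    KMArc q a b ∨ KMArc q b a := by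
  have arc_of_rel : ∀ a b : ℕ,
      (b = a + 1 ∨ (a = 0 ∧ b = 4 * q + 1) ∨ (∃ i, 1 ≤ i ∧ i ≤ q ∧ a = i ∧ b = q + 3 * i) ∨
        ∃ i, 1 ≤ i ∧ i ≤ q ∧ a = q + 3 * i - 1 ∧ b = q + 3 * i + 1) →
      (¬ ∃ i, 1 ≤ i ∧ i ≤ q - 1 ∧ a = i ∧ b = i + 1) → KMArc q a b := by
    rintro a b (h | h | ⟨i, h⟩ | ⟨i, h⟩) not_deleted
    · refine .inl ⟨h, ?_⟩
      by_contra ha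
      exact not_deleted ⟨a, by omega⟩
    · exact .inr (.inl h)
    · exact .inr (.inr (.inl (by omega)))
    · exact .inr (.inr (.inr ⟨i, by omega⟩))
  simp only [KMbar, MEbar, SimpleGraph.sdiff_adj, SimpleGraph.fromRel_adj] at h
  obtain ⟨⟨hne, hab | hba⟩, not_deleted⟩ := h
  · exact .inl (arc_of_rel a b hab fun hdel => not_deleted ⟨hne, .inl hdel⟩)
  · exact .inr (arc_of_rel b a hba fun hdel => not_deleted ⟨hne, .inr hdel⟩)

theorem kmArc_of_adj_of_lt {q : ℕ} {a b : Fin (4 * q + 2)} (h : (KMbar q).Adj a b) (hlt : a < b) :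
    KMArc q a b :=
  (kmArc_or_kmArc_of_adj h).resolve_right fun hba => hba.lt.not_gt hlt

theorem KMArc.eq_of_common_head {q m b d : ℕ} (hbm : KMArc q b m) (hdm : KMArc q d m)
    (hbd : b < d) :
    (∃ i, 1 ≤ i ∧ i ≤ q ∧ b = i ∧ d + 1 = q + 3 * i ∧ m = q + 3 * i) ∨
      (∃ i, 1 ≤ i ∧ i ≤ q ∧ b + 1 = q + 3 * i ∧ d = q + 3 * i ∧ m = q + 3 * i + 1) ∨
      (b = 0 ∧ (d + 1 = 4 * q ∨ d = 4 * q) ∧ m = 4 * q + 1) := by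
  rcases hbm with hb | hb | hb | ⟨i, hb⟩
  · rcases hdm with hd | hd | hd | ⟨j, hd⟩ <;> omega
  · rcases hdm with hd | hd | hd | ⟨j, hd⟩ <;> omega
  · refine .inl ⟨b, ?_⟩
    rcases hdm with hd | hd | hd | ⟨j, hd⟩ <;> omega
  · refine .inr (.inl ⟨i, ?_⟩)
    rcases hdm with hd | hd | hd | ⟨j, hd⟩ <;> omega

section CommonNeighbors

variable {q i : ℕ} {b c d : Fin (4 * q + 2)}

theorem eq_v₂_of_mem_commonNeighbors_u_v₁ (hq : 2 ≤ q) (hi : 1 ≤ i)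
    (hb : b.val = i) (hd : d.val + 1 = q + 3 * i) (hc : c ∈ (KMbar q).commonNeighbors b d) :
    c.val = q + 3 * i := by
  have c_eq : c.val = 0 ∨ (i = q ∧ c.val = q + 1) ∨ c.val = q + 3 * i := by
    rcases kmArc_or_kmArc_of_adj hc.1 with (h | h | h | ⟨j, h⟩) | (h | h | h | ⟨j, h⟩) <;> omega
  rcases kmArc_or_kmArc_of_adj hc.2 with (h | h | h | ⟨j, h⟩) | (h | h | h | ⟨j, h⟩) <;> omega

theorem eq_v₃_of_mem_commonNeighbors_v₁_v₂ (hi : 1 ≤ i)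
    (hb : b.val + 1 = q + 3 * i) (hd : d.val = q + 3 * i)
    (hc : c ∈ (KMbar q).commonNeighbors b d) : c.val = q + 3 * i + 1 := by
  have c_eq : c.val = i ∨ c.val + 1 = q + 3 * i ∨ c.val = q + 3 * i + 1 := by
    rcases kmArc_or_kmArc_of_adj hc.2 with (h | h | h | ⟨j, h⟩) | (h | h | h | ⟨j, h⟩) <;> omega
  rcases kmArc_or_kmArc_of_adj hc.1 with (h | h | h | ⟨j, h⟩) | (h | h | h | ⟨j, h⟩) <;> omega

theorem eq_v₃_of_mem_commonNeighbors_u₀ (hq : 2 ≤ q) (hb : b.val = 0)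
    (hd : d.val + 1 = 4 * q ∨ d.val = 4 * q) (hc : c ∈ (KMbar q).commonNeighbors b d) :
    c.val = 4 * q + 1 := by
  have c_eq : c.val = 1 ∨ c.val = 4 * q + 1 := by
    rcases kmArc_or_kmArc_of_adj hc.1 with (h | h | h | ⟨j, h⟩) | (h | h | h | ⟨j, h⟩) <;> omega
  rcases kmArc_or_kmArc_of_adj hc.2 with (h | h | h | ⟨j, h⟩) | (h | h | h | ⟨j, h⟩) <;> omega

end CommonNeighbors

theorem stmt13_general {q : ℕ} (hq : 2 ≤ q) ⦃a c : Fin (4 * q + 2)⦄ (hac : a ≠ c) :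
    ((KMbar q).commonNeighbors a c).Subsingleton := by
  refine commonNeighbors_subsingleton_of_forall_le ?_ hac
  intro m b d hbd hdm bm dm c hc
  have b_arc := kmArc_of_adj_of_lt bm (hbd.trans hdm)
  have d_arc := kmArc_of_adj_of_lt dm hdm
  suffices c = m from this.ge
  apply Fin.ext
  rcases b_arc.eq_of_common_head d_arc hbd with
    ⟨i, hi, -, hb, hd, hm⟩ | ⟨i, hi, -, hb, hd, hm⟩ | ⟨hb, hd, hm⟩
  · exact (eq_v₂_of_mem_commonNeighbors_u_v₁ hq hi hb hd hc).trans hm.symm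
  · exact (eq_v₃_of_mem_commonNeighbors_v₁_v₂ hi hb hd hc).trans hm.symm
  · exact (eq_v₃_of_mem_commonNeighbors_u₀ hq hb hd hc).trans hm.symm

/-- for every `q ≥ 2`, the graph `KMbar_q` is `C₄`-free. -/
theorem stmt13 : ∀ q : ℕ, 2 ≤ q → C4Free (KMbar q) := by
  exact fun _ hq => c4Free_of_commonNeighbors_subsingleton (stmt13_general hq)
end

section
/- For every integer q ≥ 2, the graph KM_q (the complement of KMbar_q) is a 2q-chromatic 2K2-free graph which admits a frozen (2q+1)-colouring. -/
/-- A colouring is frozen if every vertex has a neighbour in each colour class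
other than its own. -/
def IsFrozenColoring {V : Type*} (G : SimpleGraph V) {k : ℕ} (C : G.Coloring (Fin k)) : Prop :=
  ∀ (v : V) (j : Fin k), j ≠ C v → ∃ w : V, G.Adj v w ∧ C w = j

/-!
A colouring of `Gᶜ` is a partition of `G` into cliques. The `q` triangles `v_{i1} v_{i2} v_{i3}`,
the edges `u_0 u_1` and `u_q u_{q+1}` and the remaining vertices `u_i` partition `KMbar q` into `2q`
cliques, and `u_1, …, u_q, v_{11}, …, v_{q1}` is an independent set that meets each of them.

An induced `2K₂` in `Gᶜ` is an induced 4-cycle in `G`, but `KMbar q` contains no 4-cycle at all: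
apart from the `v_{i1}`, only `u_0` and `u_q` are adjacent to two vertices later in the Hamiltonian
cycle, and such a pair never has a second common neighbour further along.

The frozen colouring is a perfect matching of `KMbar q` none of whose edges lies in a triangle:
every vertex outside a matching edge is then non-adjacent in `KMbar q` to one of its ends.
-/

section General

variable {V α : Type*} {G : SimpleGraph V}

/-- A partition of the vertices of `G` into cliques, given by its class map, as a colouring of the
complement of `G`. -/
def cliqueCoverColoring (f : V → α) (hf : ∀ ⦃a b⦄, a ≠ b → f a = f b → G.Adj a b) :
    Gᶜ.Coloring α :=
  SimpleGraph.Coloring.mk f fun {_ _} hab hfab => hab.2 (hf hab.1 hfab)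

theorem twoK2Free_compl_iff :
    TwoK2Free Gᶜ ↔ ∀ a b, Gᶜ.Adj a b → G.IsClique (G.commonNeighbors a b) := by
  constructor
  · intro hfree a b hab c hc d hd hcd
    by_contra hcd'
    exact hfree ⟨a, b, c, d, hab, ⟨hcd, hcd'⟩, fun h => h.2 hc.1, fun h => h.2 hd.1,
      fun h => h.2 hc.2, fun h => h.2 hd.2⟩
  · rintro hclique ⟨a, b, c, d, hab, hcd, hac, had, hbc, hbd⟩
    have adj_of_compl {x y z : V} (hxy : ¬ Gᶜ.Adj x y) (hxz : ¬ Gᶜ.Adj x z) (hyz : Gᶜ.Adj y z) :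
        G.Adj x y := by
      by_contra h
      obtain rfl : x = y := by_contra fun hne => hxy ⟨hne, h⟩
      exact hxz hyz
    exact hcd.2 <| hclique a b hab
      ⟨adj_of_compl hac had hcd, adj_of_compl hbc hbd hcd⟩
      ⟨adj_of_compl had hac hcd.symm, adj_of_compl hbd hbc hcd.symm⟩ hcd.1

-- `hmin` excludes every 4-cycle: each one can be written `a c b d` with `a` least and `c < d`.
theorem commonNeighbors_subsingleton_of_min [LinearOrder V]
    (hmin : ∀ ⦃a b c d⦄, a < b → a < c → c < d →
      G.Adj a c → G.Adj a d → G.Adj b c → ¬ G.Adj b d)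
    {a b : V} (hab : a ≠ b) : (G.commonNeighbors a b).Subsingleton := by
  rintro c ⟨hac, hbc⟩ d ⟨had, hbd⟩
  by_contra hcd
  wlog hab_lt : a < b generalizing a b
  · exact this hab.symm hbc hac hbd had (hab.lt_or_gt.resolve_left hab_lt)
  wlog hcd_lt : c < d generalizing c d
  · exact this (Ne.symm hcd) had hbd hac hbc ((Ne.lt_or_gt hcd).resolve_left hcd_lt)
  rcases hac.ne.lt_or_gt with hac_lt | hca_lt
  · exact hmin hab_lt hac_lt hcd_lt hac had hbc hbd
  · exact hmin hcd_lt hca_lt hab_lt hac.symm hbc.symm had.symm hbd.symm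

theorem isFrozenColoring_compl_of_triangles {k : ℕ} (C : Gᶜ.Coloring (Fin k))
    (htwo : ∀ j, ∃ x y, x ≠ y ∧ C x = j ∧ C y = j)
    (htriangle : ∀ ⦃a b c⦄, G.Adj a b → G.Adj a c → G.Adj b c → C b ≠ C c) :
    IsFrozenColoring Gᶜ C := by
  intro v j hj
  obtain ⟨x, y, hxy, hx, hy⟩ := htwo j
  have hxy_adj : G.Adj x y := by
    by_contra h
    exact C.valid ⟨hxy, h⟩ (hx.trans hy.symm)
  by_cases hvx : G.Adj v x
  · have hvy : ¬ G.Adj v y := fun hvy => htriangle hvx hvy hxy_adj (hx.trans hy.symm)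
    exact ⟨y, ⟨fun h => hj (h ▸ hy.symm), hvy⟩, hy⟩
  · exact ⟨x, ⟨fun h => hj (h ▸ hx.symm), hvx⟩, hx⟩

end General

namespace KMbar

/-- The edges of `KMbar q` from a smaller to a larger label: those at `u_0`, the edges `u_i v_{i2}`,
the part of the Hamiltonian cycle from `u_q` to `v_{q3}`, and the edges `v_{i1} v_{i3}`. -/
def ForwardEdge (q a b : ℕ) : Prop :=
  (a = 0 ∧ (b = 1 ∨ b = 4 * q + 1)) ∨ (1 ≤ a ∧ a ≤ q ∧ b = q + 3 * a) ∨ (q ≤ a ∧ b = a + 1) ∨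
    (q + 2 ≤ a ∧ 3 ∣ a + 1 - q ∧ b = a + 2)

variable {q : ℕ}

theorem ForwardEdge.lt {a b : ℕ} (h : ForwardEdge q a b) : a < b := by
  unfold ForwardEdge at h
  omega

theorem adj_iff_forwardEdge_of_lt {a b : Fin (4 * q + 2)} (hab : a < b) :
    (KMbar q).Adj a b ↔ ForwardEdge q a b := by
  have hb := b.isLt
  rw [Fin.lt_def] at hab
  simp only [KMbar, MEbar, SimpleGraph.sdiff_adj, SimpleGraph.fromRel_adj, ForwardEdge, ne_eq,
    Fin.ext_iff]
  constructor
  · rintro ⟨⟨-, hME⟩, hdel⟩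
    have hkept : ¬ (1 ≤ a.val ∧ a.val ≤ q - 1 ∧ b.val = a + 1) := fun h =>
      hdel ⟨hab.ne, .inl ⟨a, h.1, h.2.1, rfl, h.2.2⟩⟩
    rcases hME with (h | h | ⟨i, h⟩ | ⟨i, h⟩) | (h | h | ⟨i, h⟩ | ⟨i, h⟩) <;> omega
  · intro h
    refine ⟨⟨hab.ne, .inl ?_⟩, ?_⟩
    · rcases h with h | h | h | h
      · omega
      · exact .inr (.inr (.inl ⟨a, by omega⟩))
      · omega
      · exact .inr (.inr (.inr ⟨(a + 1 - q) / 3, by omega⟩))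
    · rintro ⟨-, ⟨i, hi⟩ | ⟨i, hi⟩⟩ <;> omega

theorem adj_iff {a b : Fin (4 * q + 2)} :
    (KMbar q).Adj a b ↔ ForwardEdge q a b ∨ ForwardEdge q b a := by
  rcases lt_trichotomy a b with hab | rfl | hba
  · rw [adj_iff_forwardEdge_of_lt hab, or_iff_left fun h => hab.not_gt h.lt]
  · simpa using fun h : ForwardEdge q a a => h.lt.false
  · rw [SimpleGraph.adj_comm, adj_iff_forwardEdge_of_lt hba,
      or_iff_right fun h => hba.not_gt h.lt]

theorem ForwardEdge.cases_of_common_source {a c d : ℕ} (hac : ForwardEdge q a c)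
    (had : ForwardEdge q a d) (hcd : c < d) :
    (a = 0 ∧ c = 1 ∧ d = 4 * q + 1) ∨ (a = q ∧ c = q + 1 ∧ d = 4 * q) ∨
      ∃ i, 1 ≤ i ∧ a = q + 3 * i - 1 ∧ c = q + 3 * i ∧ d = q + 3 * i + 1 := by
  unfold ForwardEdge at hac had
  by_cases hv : q + 2 ≤ a
  · exact .inr (.inr ⟨(a + 1 - q) / 3, by omega⟩)
  · omega

theorem commonNeighbors_subsingleton (hq : 2 ≤ q) {a b : Fin (4 * q + 2)} (hab : a ≠ b) :
    ((KMbar q).commonNeighbors a b).Subsingleton := by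
  refine commonNeighbors_subsingleton_of_min (fun a b c d hab hac hcd hac_adj had_adj hbc hbd => ?_)
    hab
  rw [adj_iff_forwardEdge_of_lt hac] at hac_adj
  rw [adj_iff_forwardEdge_of_lt (hac.trans hcd)] at had_adj
  rw [adj_iff] at hbc hbd
  rw [Fin.lt_def] at hab
  unfold ForwardEdge at hbc hbd
  rcases hac_adj.cases_of_common_source had_adj hcd with h | h | ⟨i, h⟩ <;> omega

theorem twoK2Free_compl (hq : 2 ≤ q) : TwoK2Free (KMbar q)ᶜ :=
  twoK2Free_compl_iff.2 fun _ _ hab => .of_subsingleton (commonNeighbors_subsingleton hq hab.ne)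

theorem eq_of_triangle_of_lt {a b c : Fin (4 * q + 2)} (hab : a < b) (hbc : b < c)
    (hab_adj : (KMbar q).Adj a b) (hac_adj : (KMbar q).Adj a c) (hbc_adj : (KMbar q).Adj b c) :
    ∃ i, 1 ≤ i ∧ a.val = q + 3 * i - 1 ∧ b.val = q + 3 * i ∧ c.val = q + 3 * i + 1 := by
  rw [adj_iff_forwardEdge_of_lt hab] at hab_adj
  rw [adj_iff_forwardEdge_of_lt (hab.trans hbc)] at hac_adj
  rw [adj_iff_forwardEdge_of_lt hbc] at hbc_adj
  unfold ForwardEdge at hbc_adj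
  rcases hab_adj.cases_of_common_source hac_adj hbc with h | h | h
  · omega
  · omega
  · exact h

theorem exists_mem_Icc_of_triangle {a b c : Fin (4 * q + 2)} (hab : (KMbar q).Adj a b)
    (hac : (KMbar q).Adj a c) (hbc : (KMbar q).Adj b c) :
    ∃ i, 1 ≤ i ∧ b.val ∈ Set.Icc (q + 3 * i - 1) (q + 3 * i + 1) ∧
      c.val ∈ Set.Icc (q + 3 * i - 1) (q + 3 * i + 1) := by
  simp only [Set.mem_Icc]
  wlog hlt : b < c generalizing b c
  · obtain ⟨i, hi, hc, hb⟩ := this hac hab hbc.symm (hbc.ne.lt_or_gt.resolve_left hlt)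
    exact ⟨i, hi, hb, hc⟩
  rcases hab.ne.lt_or_gt with hab_lt | hba_lt
  · obtain ⟨i, h⟩ := eq_of_triangle_of_lt hab_lt hlt hab hac hbc
    exact ⟨i, by omega⟩
  rcases hac.ne.lt_or_gt with hac_lt | hca_lt
  · obtain ⟨i, h⟩ := eq_of_triangle_of_lt hba_lt hac_lt hab.symm hbc hac
    exact ⟨i, by omega⟩
  · obtain ⟨i, h⟩ := eq_of_triangle_of_lt hlt hca_lt hbc hab.symm hac.symm
    exact ⟨i, by omega⟩

/-- The class map of the partition of `KMbar q` into the `q` triangles `v_{i1} v_{i2} v_{i3}`, the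
edges `u_0 u_1` and `u_q u_{q+1}`, and the single vertices `u_2, …, u_{q-1}`. The vertex `u_i` is
sent to `i - 1` clamped to `0, …, q - 1`, and `v_{ij}` to `q + i - 1`. -/
def triangleClass (q a : ℕ) : ℕ :=
  if a < q + 2 then min (a - 1) (q - 1) else q + (a - q - 2) / 3

/-- The class map of the perfect matching of `KMbar q` with edges `u_0 v_{q3}` (class `0`),
`u_i v_{i2}` (class `i`), and the Hamiltonian cycle edge entering `v_{i1}` (class `q + i`). -/
def matchingClass (q a : ℕ) : ℕ :=
  if a ≤ q then a
  else if (a - q) % 3 = 0 then (a - q) / 3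
  else if a = 4 * q + 1 then 0
  else q + 1 + (a - q) / 3

theorem triangleClass_lt {a : ℕ} (hq : 0 < q) (ha : a < 4 * q + 2) : triangleClass q a < 2 * q := by
  unfold triangleClass
  split_ifs <;> omega

theorem matchingClass_lt {a : ℕ} (ha : a < 4 * q + 2) : matchingClass q a < 2 * q + 1 := by
  unfold matchingClass
  split_ifs <;> omega

theorem adj_of_triangleClass_eq (hq : 2 ≤ q) {a b : Fin (4 * q + 2)} (hab : a ≠ b)
    (h : triangleClass q a = triangleClass q b) : (KMbar q).Adj a b := by
  wlog hlt : a < b generalizing a b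
  · exact (this hab.symm h.symm (hab.lt_or_gt.resolve_left hlt)).symm
  rw [adj_iff_forwardEdge_of_lt hlt]
  rw [Fin.lt_def] at hlt
  unfold triangleClass at h
  unfold ForwardEdge
  split_ifs at h <;> omega

theorem adj_of_matchingClass_eq {a b : Fin (4 * q + 2)} (hab : a ≠ b)
    (h : matchingClass q a = matchingClass q b) : (KMbar q).Adj a b := by
  wlog hlt : a < b generalizing a b
  · exact (this hab.symm h.symm (hab.lt_or_gt.resolve_left hlt)).symm
  rw [adj_iff_forwardEdge_of_lt hlt]
  rw [Fin.lt_def] at hlt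
  unfold matchingClass at h
  unfold ForwardEdge
  split_ifs at h <;> omega

theorem compl_colorable (hq : 2 ≤ q) : (KMbar q)ᶜ.Colorable (2 * q) :=
  ⟨cliqueCoverColoring (fun a => ⟨triangleClass q a, triangleClass_lt (by omega) a.isLt⟩)
    fun _ _ hab h => adj_of_triangleClass_eq hq hab (Fin.ext_iff.1 h)⟩

/-- The independent set `u_1, …, u_q, v_{11}, …, v_{q1}` of `KMbar q`, listed by
`k = 0, …, 2q - 1`. -/
def indepVertex (q k : ℕ) : ℕ :=
  if k < q then k + 1 else q + 2 + 3 * (k - q)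

theorem indepVertex_lt {k : ℕ} (hk : k < 2 * q) : indepVertex q k < 4 * q + 2 := by
  unfold indepVertex
  split_ifs <;> omega

theorem indepVertex_injective (q : ℕ) : Function.Injective (indepVertex q) := by
  intro k l h
  unfold indepVertex at h
  split_ifs at h <;> omega

theorem not_forwardEdge_indepVertex (k l : ℕ) :
    ¬ ForwardEdge q (indepVertex q k) (indepVertex q l) := by
  have hmem (k : ℕ) : (1 ≤ indepVertex q k ∧ indepVertex q k ≤ q) ∨
      (q + 2 ≤ indepVertex q k ∧ 3 ∣ indepVertex q k + 1 - q) := by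
    unfold indepVertex
    split_ifs <;> omega
  have hk := hmem k
  have hl := hmem l
  unfold ForwardEdge
  omega

theorem le_chromaticNumber_compl (q : ℕ) : ((2 * q : ℕ) : ℕ∞) ≤ (KMbar q)ᶜ.chromaticNumber := by
  let s (k : Fin (2 * q)) : Fin (4 * q + 2) := ⟨indepVertex q k, indepVertex_lt k.isLt⟩
  have hs : Pairwise fun k l => (KMbar q)ᶜ.Adj (s k) (s l) := fun k l hkl =>
    ⟨fun h => hkl (Fin.ext (indepVertex_injective q (Fin.ext_iff.1 h))), fun h =>
      (adj_iff.1 h).elim (not_forwardEdge_indepVertex _ _) (not_forwardEdge_indepVertex _ _)⟩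
  exact SimpleGraph.le_chromaticNumber_of_pairwise_adj (by simp) s hs

theorem chromaticNumber_compl (hq : 2 ≤ q) :
    (KMbar q)ᶜ.chromaticNumber = ((2 * q : ℕ) : ℕ∞) :=
  le_antisymm (compl_colorable hq).chromaticNumber_le (le_chromaticNumber_compl q)

theorem exists_ne_matchingClass_eq {j : ℕ} (hj : j < 2 * q + 1) :
    ∃ x y : Fin (4 * q + 2), x ≠ y ∧ matchingClass q x = j ∧ matchingClass q y = j := by
  suffices ∃ x y, x < y ∧ y < 4 * q + 2 ∧ matchingClass q x = j ∧ matchingClass q y = j by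
    obtain ⟨x, y, hxy, hy, hxj, hyj⟩ := this
    exact ⟨⟨x, hxy.trans hy⟩, ⟨y, hy⟩, by simpa using hxy.ne, hxj, hyj⟩
  unfold matchingClass
  obtain rfl | ⟨hj_pos, hjq⟩ | hqj : j = 0 ∨ (1 ≤ j ∧ j ≤ q) ∨ q + 1 ≤ j := by omega
  · exact ⟨0, 4 * q + 1, by grind⟩
  · exact ⟨j, q + 3 * j, by grind⟩
  · exact ⟨q + 3 * (j - q - 1) + 1, q + 3 * (j - q - 1) + 2, by grind⟩

theorem matchingClass_ne_of_triangle {a b c : Fin (4 * q + 2)} (hab : (KMbar q).Adj a b)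
    (hac : (KMbar q).Adj a c) (hbc : (KMbar q).Adj b c) :
    matchingClass q b ≠ matchingClass q c := by
  obtain ⟨i, hi, hb, hc⟩ := exists_mem_Icc_of_triangle hab hac hbc
  have hne := Fin.val_ne_of_ne hbc.ne
  rw [Set.mem_Icc] at hb hc
  unfold matchingClass
  split_ifs <;> omega

theorem exists_isFrozenColoring_compl (q : ℕ) :
    ∃ C : (KMbar q)ᶜ.Coloring (Fin (2 * q + 1)), IsFrozenColoring (KMbar q)ᶜ C := by
  let C : (KMbar q)ᶜ.Coloring (Fin (2 * q + 1)) :=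
    cliqueCoverColoring (fun a => ⟨matchingClass q a, matchingClass_lt a.isLt⟩)
      fun _ _ hab h => adj_of_matchingClass_eq hab (Fin.ext_iff.1 h)
  have hC (a b) : C a = b ↔ matchingClass q a = b := Fin.ext_iff
  refine ⟨C, isFrozenColoring_compl_of_triangles C (fun j => ?_) fun a b c hab hac hbc h => ?_⟩
  · simpa only [hC] using exists_ne_matchingClass_eq j.isLt
  · exact matchingClass_ne_of_triangle hab hac hbc (Fin.ext_iff.1 h)

end KMbar

/-- for every `q ≥ 2`, the graph `KM_q` (the complement of `KMbar_q`) is a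
`2q`-chromatic `2K₂`-free graph which admits a frozen `(2q+1)`-colouring. -/
theorem stmt15 : ∀ q : ℕ, 2 ≤ q →
    ((KMbar q)ᶜ).chromaticNumber = ((2*q : ℕ) : ℕ∞) ∧
    TwoK2Free (KMbar q)ᶜ ∧
    ∃ C : ((KMbar q)ᶜ).Coloring (Fin (2*q+1)), IsFrozenColoring (KMbar q)ᶜ C := by
  intro q hq
  exact ⟨KMbar.chromaticNumber_compl hq, KMbar.twoK2Free_compl hq,
    KMbar.exists_isFrozenColoring_compl q⟩
end
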